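/- arXiv:1911.08441 — 2 statements merged into one kernel-verified Lean document; each statement's English description precedes it below -/
import Mathlib

section
/- Let J̄ ⊆ P = K[y_1, …, y_n] be a monomial ideal and let J = Φ(J̄)S ⊆ S = K[x_1, …, x_n] be its extension under the K-algebra homomorphism Φ with Φ(y_i) = x_i^{ℓ_i}. Then S/J and P/J̄ have the same projective dimension; equivalently, sup{ h : Tor_h^S(S/J, S/(x_1, …, x_n)) ≠ 0 } = sup{ h : Tor_h^P(P/J̄, P/(y_1, …, y_n)) ≠ 0 }. -/
/-!
Extending scalars along a ring homomorphism `f : R →+* S` that makes `S` a projective `R`-module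
does not change `Tor`: an `S`-projective resolution `F` of `N` is also an `R`-projective resolution
of `N`, and `(S ⊗[R] A) ⊗[S] F = A ⊗[R] F`, so `Tor^S_h(S ⊗[R] A, N) = Tor^R_h(A, N)`.

For `Φ(y_i) = x_i^{ℓ_i}`, division with remainder of exponents shows that `S` is free over `P` on
the monomials `x^r` with `r_i < ℓ_i` for all `i`. Moreover `S ⊗[P] P/J̄ = S/J`, and `Φ` induces an
isomorphism from `P/(y_1, …, y_n)` to `S/(x_1, …, x_n)` since each `ℓ_i` is positive.
-/

open CategoryTheory MvPolynomial

/-- `Tor_h^T(T/N, T/𝔪_T) ≠ 0` for `T = K[x_1,…,x_n]` with irrelevant maximal ideal `𝔪_T`. -/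
def torNonzero (K : Type) [Field K] (n : ℕ)
    (N : Ideal (MvPolynomial (Fin n) K)) (h : ℕ) : Prop :=
  Nontrivial
    (((Tor (ModuleCat (MvPolynomial (Fin n) K)) h).obj
        (ModuleCat.of _ (MvPolynomial (Fin n) K ⧸ N))).obj
      (ModuleCat.of _ (MvPolynomial (Fin n) K ⧸
        Ideal.span (Set.range (X : Fin n → MvPolynomial (Fin n) K)))))

section LeftDerived

variable {C D : Type*} [Category* C] [Category* D] [Abelian C] [Abelian D]
  [HasProjectiveResolutions C] [HasProjectiveResolutions D]

/-- The commutation of an exact functor `F` that preserves projective objects with left derived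
functors: `F (L_n G X) ≅ L_n G' (F X)` whenever `F ∘ G ≅ G' ∘ F`. -/
noncomputable def leftDerivedObjIsoOfExact
    (F : C ⥤ D) [F.Additive] [F.PreservesHomology] [F.PreservesProjectiveObjects]
    {G : C ⥤ C} [G.Additive] {G' : D ⥤ D} [G'.Additive] (e : G ⋙ F ≅ F ⋙ G') (n : ℕ) (X : C) :
    F.obj ((G.leftDerived n).obj X) ≅ (G'.leftDerived n).obj (F.obj X) :=
  let P := projectiveResolution X
  F.mapIso (P.isoLeftDerivedObj G n) ≪≫
    ((((G.mapHomologicalComplex _).obj P.complex).sc n).mapHomologyIso F).symm ≪≫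
    (HomologicalComplex.homologyFunctor D _ n).mapIso
      ((NatIso.mapHomologicalComplex e _).app P.complex) ≪≫
    ((F.mapProjectiveResolution P).isoLeftDerivedObj G' n).symm

end LeftDerived

section BaseChangeTensor

open TensorProduct

variable (R S A M : Type*) [CommSemiring R] [CommSemiring S] [Algebra R S] [AddCommMonoid A]
  [Module R A] [AddCommMonoid M] [Module R M] [Module S M] [IsScalarTower R S M]

/-- The cancellation of a base change in the left factor of a tensor product; Mathlib's
`cancelBaseChange` has the base change in the right factor. -/
noncomputable def baseChangeTensorEquiv : (S ⊗[R] A) ⊗[S] M ≃ₗ[R] A ⊗[R] M :=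
  (TensorProduct.comm S (S ⊗[R] A) M ≪≫ₗ
      AlgebraTensorModule.cancelBaseChange R S S M A).restrictScalars R ≪≫ₗ
    TensorProduct.comm R M A

variable {M} in
theorem baseChangeTensorEquiv_lTensor {N : Type*} [AddCommMonoid N] [Module R N] [Module S N]
    [IsScalarTower R S N] (g : M →ₗ[S] N) (x : (S ⊗[R] A) ⊗[S] M) :
    baseChangeTensorEquiv R S A N (g.lTensor _ x) =
      (g.restrictScalars R).lTensor A (baseChangeTensorEquiv R S A M x) := by
  induction x using TensorProduct.induction_on with
  | zero => simp
  | add x y hx hy => simp only [map_add, hx, hy]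
  | tmul y m =>
    induction y using TensorProduct.induction_on with
    | zero => simp
    | add y z hy hz => simp only [TensorProduct.add_tmul, map_add, hy, hz]
    | tmul s a => simp [baseChangeTensorEquiv]

end BaseChangeTensor

section ChangeOfRings

open ModuleCat TensorProduct MonoidalCategory

universe u v w

theorem preservesProjectiveObjects_restrictScalars {R : Type v} {S : Type w} [Ring R] [Ring S]
    (f : R →+* S) [Module.Projective R ((restrictScalars f).obj (of S S))] :
    (restrictScalars.{max u w} f).PreservesProjectiveObjects := by
  -- The right adjoint `Hom_R(S, -)` of restriction is exact because `S` is projective.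
  have : (coextendScalars.{v, w, max u w} f).PreservesEpimorphisms := ⟨fun {M N} g hg => by
    refine (ModuleCat.epi_iff_surjective _).2 fun h => ?_
    obtain ⟨k, hk⟩ := Module.projective_lifting_property g.hom (CoextendScalars.equiv f N h)
      ((ModuleCat.epi_iff_surjective g).1 hg)
    have hmap : (coextendScalars f).map g ((CoextendScalars.equiv f M).symm k) = h :=
      CoextendScalars.ext hk
    exact ⟨_, hmap⟩⟩
  exact Functor.preservesProjectiveObjects_of_adjunction_of_preservesEpimorphisms
    (restrictCoextendScalarsAdj.{max u w, v, w} f)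

variable {R S : Type u} [CommRing R] [CommRing S] (f : R →+* S)

/-- The projection formula `(S ⊗[R] A) ⊗[S] M ≅ A ⊗[R] M`, natural in the `S`-module `M`. -/
noncomputable def tensorLeftExtendScalarsIso (A : ModuleCat.{u} R) :
    tensorLeft ((extendScalars.{u, u, u} f).obj A) ⋙ restrictScalars.{u} f ≅
      restrictScalars.{u} f ⋙ tensorLeft A :=
  letI := f.toAlgebra
  letI (M : ModuleCat.{u} S) : Module R M := Module.compHom M f
  haveI (M : ModuleCat.{u} S) : IsScalarTower R S M := .of_algebraMap_smul fun _ _ => rfl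
  NatIso.ofComponents
    (fun M => LinearEquiv.toModuleIso
      (X₁ := (restrictScalars.{u} f).obj ((extendScalars.{u, u, u} f).obj A ⊗ M))
      (X₂ := (A ⊗ (restrictScalars.{u} f).obj M : ModuleCat.{u} R))
      (baseChangeTensorEquiv R S A M))
    fun {M N} g => by
      ext x
      exact baseChangeTensorEquiv_lTensor R S A g.hom x

/-- The invariance of `Tor` under projective base change. -/
noncomputable def torExtendScalarsIso [Module.Projective R ((restrictScalars f).obj (of S S))]
    (A : ModuleCat.{u} R) (M : ModuleCat.{u} S) (n : ℕ) :
    (restrictScalars f).obj (((Tor (ModuleCat S) n).obj ((extendScalars f).obj A)).obj M) ≅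
      ((Tor (ModuleCat R) n).obj A).obj ((restrictScalars f).obj M) :=
  haveI := preservesProjectiveObjects_restrictScalars.{u} f
  leftDerivedObjIsoOfExact (restrictScalars f) (tensorLeftExtendScalarsIso f A) n M

/-- The identification `S ⊗[R] (R ⧸ I) ≅ S ⧸ I S`. -/
noncomputable def extendScalarsQuotientIso (I : Ideal R) :
    (extendScalars f).obj (of R (R ⧸ I)) ≅ of S (S ⧸ I.map f) :=
  letI := f.toAlgebra
  (Algebra.TensorProduct.quotIdealMapEquivTensorQuot S I).symm.toLinearEquiv.toModuleIso

/-- The first isomorphism theorem for `R → S ⧸ L`, as an isomorphism of `R`-modules. -/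
noncomputable def restrictScalarsQuotientIso {L : Ideal S} {I : Ideal R}
    (hker : RingHom.ker ((Ideal.Quotient.mk L).comp f) = I)
    (hsurj : Function.Surjective ((Ideal.Quotient.mk L).comp f)) :
    (restrictScalars f).obj (of S (S ⧸ L)) ≅ of R (R ⧸ I) :=
  letI := f.toAlgebra
  (Submodule.quotEquivOfEq _ _ hker.symm ≪≫ₗ
    (Algebra.linearMap R (S ⧸ L)).quotKerEquivOfSurjective hsurj).symm.toModuleIso

theorem nontrivial_tor_quotient_map_iff [Module.Projective R ((restrictScalars f).obj (of S S))]
    (J : Ideal R) {L : Ideal S} {I : Ideal R}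
    (hker : RingHom.ker ((Ideal.Quotient.mk L).comp f) = I)
    (hsurj : Function.Surjective ((Ideal.Quotient.mk L).comp f)) (n : ℕ) :
    Nontrivial (((Tor (ModuleCat S) n).obj (of S (S ⧸ J.map f))).obj (of S (S ⧸ L))) ↔
      Nontrivial (((Tor (ModuleCat R) n).obj (of R (R ⧸ J))).obj (of R (R ⧸ I))) :=
  let extendIso := ((Tor (ModuleCat S) n).mapIso (extendScalarsQuotientIso f J)).app (of S (S ⧸ L))
  let restrictIso := ((Tor (ModuleCat R) n).obj (of R (R ⧸ J))).mapIso
    (restrictScalarsQuotientIso f hker hsurj)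
  let torIso := (restrictScalars f).mapIso extendIso.symm ≪≫ torExtendScalarsIso f _ _ n ≪≫
    restrictIso
  torIso.toLinearEquiv.toEquiv.nontrivial_congr

end ChangeOfRings

section FreeOfBasis

variable {K R ι κ : Type*} [CommSemiring K]

theorem free_of_basis_smul {M : Type*} [Semiring R] [Algebra K R] [AddCommMonoid M] [Module K M]
    [Module R M] [IsScalarTower K R M] (b : Module.Basis ι K R) (c : κ → M)
    (d : Module.Basis (κ × ι) K M) (hd : ∀ j i, d (j, i) = b i • c j) : Module.Free R M := by
  let B : Module.Basis (Σ _ : κ, ι) K (κ →₀ R) := Finsupp.basis fun _ => b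
  let E : (κ →₀ R) ≃ₗ[K] M := B.equiv d (Equiv.sigmaEquivProd κ ι)
  have hE : (Finsupp.linearCombination R c).restrictScalars K = E := B.ext fun ⟨j, i⟩ => by
    have hE_basis : E (B ⟨j, i⟩) = b i • c j := by simp only [E, B.equiv_apply]; simp [hd]
    simpa [B] using hE_basis.symm
  have hbij : Function.Bijective (Finsupp.linearCombination R c) := by
    have hE_bij := E.bijective
    rwa [← LinearEquiv.coe_coe, ← hE] at hE_bij
  exact .of_basis (.ofRepr (LinearEquiv.ofBijective _ hbij).symm)

theorem free_restrictScalars_of_basis_mul {S : Type*} [CommRing R] [CommRing S] [Algebra K R]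
    [Algebra K S] (φ : R →ₐ[K] S) (b : Module.Basis ι K R) (c : κ → S)
    (d : Module.Basis (κ × ι) K S) (hd : ∀ j i, d (j, i) = φ (b i) * c j) :
    Module.Free R ((ModuleCat.restrictScalars φ.toRingHom).obj (.of S S)) := by
  let := φ.toRingHom.toAlgebra
  have : IsScalarTower K R S := .of_algebraMap_eq fun r => (φ.commutes r).symm
  have : Module.Free R S := free_of_basis_smul b c d hd
  exact this

end FreeOfBasis

section ExpandVars

variable {σ : Type*} (ℓ : σ → ℕ)

/-- Coordinatewise division with remainder of exponent vectors, as remainder and quotient. -/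
noncomputable def exponentModDivEquiv (hℓ : ∀ i, 0 < ℓ i) :
    (σ →₀ ℕ) ≃ {r : σ →₀ ℕ // ∀ i, r i < ℓ i} × (σ →₀ ℕ) where
  toFun d := (⟨.onFinset d.support (fun i => d i % ℓ i) (by aesop), fun i => Nat.mod_lt _ (hℓ i)⟩,
    .onFinset d.support (fun i => d i / ℓ i) (by aesop))
  invFun p := ℓ • p.2 + p.1.1
  left_inv d := by
    ext i
    simp [Nat.div_add_mod]
  right_inv := by
    rintro ⟨⟨r, hr⟩, e⟩
    ext i
    · simp [Nat.mod_eq_of_lt (hr i)]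
    · simp [Nat.mul_add_div (hℓ i), Nat.div_eq_of_lt (hr i)]

variable (K : Type*)

/-- The endomorphism `Φ : X i ↦ X i ^ ℓ i`, the variant of `MvPolynomial.expand` with one exponent
for each variable. -/
noncomputable def expandVars [CommSemiring K] : MvPolynomial σ K →ₐ[K] MvPolynomial σ K :=
  aeval fun i => X i ^ ℓ i

theorem expandVars_monomial [CommSemiring K] (d : σ →₀ ℕ) (c : K) :
    expandVars ℓ K (monomial d c) = monomial (ℓ • d) c := by
  have hsupp : (ℓ • d).support ⊆ d.support := fun i => by simp
  rw [expandVars, aeval_monomial, algebraMap_eq, monomial_eq, Finsupp.prod,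
    Finsupp.prod_of_support_subset _ hsupp _ (by simp)]
  simp [pow_mul]

variable [CommRing K]

theorem free_restrictScalars_expandVars (hℓ : ∀ i, 0 < ℓ i) :
    Module.Free (MvPolynomial σ K)
      ((ModuleCat.restrictScalars (expandVars ℓ K).toRingHom).obj (.of _ (MvPolynomial σ K))) :=
  free_restrictScalars_of_basis_mul (expandVars ℓ K) (basisMonomials σ K)
    (fun r : {r : σ →₀ ℕ // ∀ i, r i < ℓ i} => monomial r.1 1)
    ((basisMonomials σ K).reindex (exponentModDivEquiv ℓ hℓ)) fun r e => by
      simp [expandVars_monomial, exponentModDivEquiv]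

theorem mk_idealOfVars_comp_expandVars (hℓ : ∀ i, 0 < ℓ i) :
    (Ideal.Quotient.mk (idealOfVars σ K)).comp (expandVars ℓ K).toRingHom =
      Ideal.Quotient.mk (idealOfVars σ K) := by
  ext i
  · simp
  · have hX : Ideal.Quotient.mk (idealOfVars σ K) (X i) = 0 :=
      Ideal.Quotient.eq_zero_iff_mem.2 (Ideal.subset_span ⟨i, rfl⟩)
    simp [expandVars, hX, (hℓ i).ne']

end ExpandVars

theorem weighted_ideal_projective_dimension_eq_general {σ K : Type*} [CommRing K] (ℓ : σ → ℕ)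
    (hℓ : ∀ i, 0 < ℓ i) (J : Ideal (MvPolynomial σ K)) (h : ℕ) :
    Nontrivial (((Tor (ModuleCat (MvPolynomial σ K)) h).obj
        (.of _ (MvPolynomial σ K ⧸ J.map (expandVars ℓ K)))).obj
          (.of _ (MvPolynomial σ K ⧸ idealOfVars σ K))) ↔
      Nontrivial (((Tor (ModuleCat (MvPolynomial σ K)) h).obj
        (.of _ (MvPolynomial σ K ⧸ J))).obj
          (.of _ (MvPolynomial σ K ⧸ idealOfVars σ K))) := by
  have := free_restrictScalars_expandVars ℓ K hℓ
  have hmk := mk_idealOfVars_comp_expandVars ℓ K hℓ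
  exact nontrivial_tor_quotient_map_iff (expandVars ℓ K).toRingHom J
    (by rw [hmk, Ideal.mk_ker]) (by rw [hmk]; exact Ideal.Quotient.mk_surjective) h

/-- For a monomial ideal `J̄ ⊆ P = K[y_1,…,y_n]` and its extension
`J = Φ(J̄)S` under the `K`-algebra map `Φ(y_i) = x_i^{ℓ_i}`, the quotients `S/J` and `P/J̄`
have the same projective dimension:
`sup{h : Tor_h^S(S/J, S/𝔪) ≠ 0} = sup{h : Tor_h^P(P/J̄, P/𝔪) ≠ 0}`. -/
theorem weighted_ideal_projective_dimension_eq
    (K : Type) [Field K] [Infinite K] (n : ℕ) (hn : 2 ≤ n)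
    (ℓ : Fin n → ℕ) (hℓ : ∀ i, 0 < ℓ i)
    (Jbar : Ideal (MvPolynomial (Fin n) K))
    (hmono : ∃ A : Set (Fin n →₀ ℕ),
      Jbar = Ideal.span ((fun d => (monomial d (1 : K) : MvPolynomial (Fin n) K)) '' A))
    (J : Ideal (MvPolynomial (Fin n) K))
    (hJ : J = Ideal.map
      (aeval (fun i : Fin n => (X i : MvPolynomial (Fin n) K) ^ ℓ i) :
        MvPolynomial (Fin n) K →ₐ[K] MvPolynomial (Fin n) K) Jbar) :
    sSup {h : ℕ | torNonzero K n J h} = sSup {h : ℕ | torNonzero K n Jbar h} := by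
  subst hJ
  exact congrArg sSup (Set.ext fun h => weighted_ideal_projective_dimension_eq_general ℓ hℓ Jbar h)
end

section
/- Let S = K[x_1, …, x_n] with n ≥ 2, let ℓ_1, …, ℓ_n be positive integers and let Ω = ⋂_{k=1}^n (x_1^{ℓ_1}, …, x_{k−1}^{ℓ_{k−1}}, x_{k+1}^{ℓ_{k+1}}, …, x_n^{ℓ_n}) = (x_i^{ℓ_i} x_j^{ℓ_j} : 1 ≤ i < j ≤ n). Then for every h with 0 ≤ h ≤ n−2, dim_K Tor_{h+1}^S(S/Ω, S/(x_1, …, x_n)) = (h+1)·C(n, h+2), and Tor_j^S(S/Ω, S/(x_1, …, x_n)) = 0 for all j ≥ n. -/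
open CategoryTheory MvPolynomial

/-- The dimension over `K` of (the carrier of) a module `M` over a `K`-algebra `R`. -/
noncomputable def kdim (K R : Type) [Field K] [CommRing R] [Algebra K R]
    (M : ModuleCat R) : Cardinal :=
  @Module.rank K M _ _ (Module.compHom M (algebraMap K R))

/-- `Tor_h^T(T/N, T/𝔪_T)` for `T = K[x_1,…,x_n]` with irrelevant maximal ideal `𝔪_T`. -/
noncomputable def torModule (K : Type) [Field K] (n : ℕ)
    (N : Ideal (MvPolynomial (Fin n) K)) (h : ℕ) : ModuleCat (MvPolynomial (Fin n) K) :=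
  ((Tor (ModuleCat (MvPolynomial (Fin n) K)) h).obj
      (ModuleCat.of _ (MvPolynomial (Fin n) K ⧸ N))).obj
    (ModuleCat.of _ (MvPolynomial (Fin n) K ⧸
      Ideal.span (Set.range (X : Fin n → MvPolynomial (Fin n) K))))

/-!
The generators `f i * f j` of `Ω` are adjoined one at a time, vertex by vertex. Suppose that all
products with indices in `S` and the products `f a * f y` with `a ∈ A ⊆ S` have been adjoined, and
let `c ∈ S \ A`. For a family which is regular in every order, the colon ideal of the ideal
obtained so far by `f c * f y` is the complete intersection `(f a : a ∈ S \ {c})`, whose Betti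
numbers are those of the Koszul complex, the binomial coefficients `C(|S| - 1, h)`. Multiplication
by `f c` is already well defined on the colon quotient, so multiplication by `f c * f y` is a
multiple of `f y`; as `f y` kills the second argument of `Tor`, it induces zero on `Tor`. The long
exact sequence therefore splits into short ones, and adjoining all `f c * f y` with `c ∈ S` raises
the `h`-th Betti number by `|S| * C(|S| - 1, h)`. Summing over the vertices gives
`(h + 1) * C(n, h + 2)`.
-/

section Dimension

variable {K R : Type} [Field K] [CommRing R] [Algebra K R]

lemma kdim_add_of_shortExact {S : ShortComplex (ModuleCat R)} (hS : S.ShortExact) :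
    kdim K R S.X₂ = kdim K R S.X₁ + kdim K R S.X₃ :=
  ModuleCat.free_shortExact_rank_add
    (hS.map_of_exact (ModuleCat.restrictScalars (algebraMap K R)))

lemma kdim_congr {M N : ModuleCat R} (e : M ≅ N) : kdim K R M = kdim K R N :=
  ((ModuleCat.restrictScalars (algebraMap K R)).mapIso e).toLinearEquiv.rank_eq

lemma kdim_eq_zero_iff {M : ModuleCat R} : kdim K R M = 0 ↔ Subsingleton M :=
  rank_zero_iff (R := K) (M := (ModuleCat.restrictScalars (algebraMap K R)).obj M)

end Dimension

section Tor

open MonoidalCategory Limits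

lemma smul_eq_zero_of_smul_id_eq_zero {C R : Type*} [Category* C] [Preadditive C] [CommRing R]
    [Linear R C] {X M : C} {r : R} (hr : r • 𝟙 M = 0) (f : X ⟶ M) : r • f = 0 := by
  rw [← Category.comp_id f, ← Linear.comp_smul, hr, comp_zero]

section Monoidal

variable {C : Type*} [Category* C] [MonoidalCategory C]

section Preadditive

variable [Preadditive C] [MonoidalPreadditive C] {ι : Type*} {c : ComplexShape ι}

/-- The functor `X ↦ X ⊗ P` from objects to complexes, for a fixed complex `P`. -/
abbrev tensorComplex (P : HomologicalComplex C c) : C ⥤ HomologicalComplex C c where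
  obj X := (((tensoringLeft C).obj X).mapHomologicalComplex c).obj P
  map f := (NatTrans.mapHomologicalComplex ((tensoringLeft C).map f) c).app P

instance (P : HomologicalComplex C c) : (tensorComplex P).Additive where
  map_add := by
    intros
    ext i
    exact MonoidalPreadditive.add_whiskerRight ..

lemma tensorComplex_map_smul {R : Type*} [CommRing R] [Linear R C] [MonoidalLinear R C]
    (P : HomologicalComplex C c) {X Y : C} (r : R) (f : X ⟶ Y) :
    (tensorComplex P).map (r • f) = (tensorComplex P).map f ≫
      (((tensoringLeft C).obj Y).mapHomologicalComplex c).map (r • 𝟙 P) := by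
  ext i
  change (r • f) ▷ P.X i = f ▷ P.X i ≫ Y ◁ (r • 𝟙 (P.X i))
  rw [MonoidalLinear.smul_whiskerRight, MonoidalLinear.whiskerLeft_smul, whiskerLeft_id,
    Linear.comp_smul, Category.comp_id]

end Preadditive

variable [Abelian C] [MonoidalPreadditive C] {X Y M : C}

/-- `Tor` as a functor of its first argument, computed by a projective resolution of the second. -/
noncomputable def torFlipObjIso [HasProjectiveResolutions C] (P : ProjectiveResolution M) (i : ℕ) :
    (Tor C i).flip.obj M ≅ tensorComplex P.complex ⋙ HomologicalComplex.homologyFunctor C _ i :=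
  NatIso.ofComponents (fun X => P.isoLeftDerivedObj ((tensoringLeft C).obj X) i) fun f =>
    (Iso.eq_comp_inv _).1 <|
      (ProjectiveResolution.leftDerived_app_eq ((tensoringLeft C).map f) P i).trans
        (Category.assoc _ _ _).symm

section Linear

variable {R : Type*} [CommRing R] [Linear R C] [MonoidalLinear R C] {r : R}

lemma homologyMap_tensorComplex_smul_eq_zero (P : ProjectiveResolution M) (hr : r • 𝟙 M = 0)
    (f : X ⟶ Y) (i : ℕ) :
    HomologicalComplex.homologyMap ((tensorComplex P.complex).map (r • f)) i = 0 := by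
  have hπ : (r • 𝟙 P.complex) ≫ P.π = 0 := by
    rw [Linear.smul_comp, Category.id_comp]
    ext
    exact smul_eq_zero_of_smul_id_eq_zero hr (P.π.f 0)
  have h : Homotopy (r • 𝟙 P.complex) 0 := ProjectiveResolution.liftHomotopyZero (Q := P) _ hπ
  rw [tensorComplex_map_smul, HomologicalComplex.homologyMap_comp,
    (((tensoringLeft C).obj Y).mapHomotopy h).homologyMap_eq, Functor.map_zero,
    HomologicalComplex.homologyMap_zero, comp_zero]

lemma Tor_map_smul_app_eq_zero [HasProjectiveResolutions C] (hr : r • 𝟙 M = 0) (f : X ⟶ Y)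
    (i : ℕ) : ((Tor C i).map (r • f)).app M = 0 := by
  let P := projectiveResolution M
  have hTor := NatIso.naturality_2 (torFlipObjIso P i) (r • f)
  have h' : (tensorComplex P.complex ⋙ HomologicalComplex.homologyFunctor C _ i).map (r • f) = 0 :=
    homologyMap_tensorComplex_smul_eq_zero P hr f i
  rw [h', zero_comp, comp_zero] at hTor
  exact hTor.symm

end Linear

end Monoidal

section Module

universe u

variable {R : Type u} [CommRing R]

lemma isZero_Tor_succ_of_flat (X M : ModuleCat.{u} R) [Module.Flat R X] (i : ℕ) :
    IsZero (((Tor (ModuleCat R) (i + 1)).obj X).obj M) := by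
  let P := projectiveResolution M
  have hP : ((tensorComplex P.complex).obj X).ExactAt (i + 1) :=
    Module.Flat.lTensor_shortComplex_exact X (P.complex.sc (i + 1)) (P.complex_exactAt_succ i)
  exact hP.isZero_homology.of_iso ((torFlipObjIso P (i + 1)).app X)

lemma shortExact_map_tensorComplex {S : ShortComplex (ModuleCat.{u} R)} (hS : S.ShortExact)
    {ι : Type*} {c : ComplexShape ι} (P : HomologicalComplex (ModuleCat.{u} R) c)
    [∀ i, Module.Flat R (P.X i)] : (S.map (tensorComplex P)).ShortExact :=
  HomologicalComplex.shortExact_of_degreewise_shortExact _ fun i =>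
    hS.map_of_exact (tensorRight (P.X i))

end Module

end Tor

section TorDim

open MonoidalCategory Limits

variable {K R : Type} [Field K] [CommRing R] [Algebra K R]

lemma kdim_Tor_succ_of_map_eq_zero {S : ShortComplex (ModuleCat R)} (hS : S.ShortExact)
    {M : ModuleCat R} (hf : ∀ i, ((Tor (ModuleCat R) i).map S.f).app M = 0) (i : ℕ) :
    kdim K R (((Tor (ModuleCat R) (i + 1)).obj S.X₃).obj M) =
      kdim K R (((Tor (ModuleCat R) (i + 1)).obj S.X₂).obj M) +
        kdim K R (((Tor (ModuleCat R) i).obj S.X₁).obj M) := by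
  let P := projectiveResolution M
  have (i : ℕ) : Module.Projective R (P.complex.X i) :=
    (IsProjective.iff_projective _).2 (P.projective i)
  have hT := shortExact_map_tensorComplex hS P.complex
  have hf' (i : ℕ) : HomologicalComplex.homologyMap (S.map (tensorComplex P.complex)).f i = 0 := by
    have hTor : ((Tor (ModuleCat R) i).flip.obj M).map S.f = 0 := hf i
    have h := NatIso.naturality_1 (torFlipObjIso P i) S.f
    rw [hTor, zero_comp, comp_zero] at h
    exact h.symm
  have hrel : (ComplexShape.down ℕ).Rel (i + 1) i := rfl
  have : Mono (HomologicalComplex.homologyMap (S.map (tensorComplex P.complex)).g (i + 1)) :=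
    (hT.homology_exact₂ (i + 1)).mono_g (hf' (i + 1))
  have : Epi (hT.δ (i + 1) i hrel) := (hT.homology_exact₁ (i + 1) i hrel).epi_f (hf' i)
  have hδ : (ShortComplex.mk _ _ (hT.comp_δ (i + 1) i hrel)).ShortExact :=
    { exact := hT.homology_exact₃ (i + 1) i hrel }
  have e (X : ModuleCat R) (i : ℕ) := kdim_congr (K := K) ((torFlipObjIso P i).app X)
  exact (e S.X₃ (i + 1)).trans <| (kdim_add_of_shortExact hδ).trans <|
    congrArg₂ (· + ·) (e S.X₂ (i + 1)).symm (e S.X₁ i).symm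

/-- Multiplication by `m` as a short complex `0 → R/(I : m) → R/I → R/(I + (m)) → 0`. -/
def colonShortComplex (I : Ideal R) (m : R) : ShortComplex (ModuleCat R) where
  X₁ := ModuleCat.of R (R ⧸ I.colon {m})
  X₂ := ModuleCat.of R (R ⧸ I)
  X₃ := ModuleCat.of R (R ⧸ (I ⊔ Ideal.span {m}))
  f := ModuleCat.ofHom <| Submodule.mapQ (I.colon {m}) I (LinearMap.mulRight R m) fun _ =>
    Submodule.mem_colon_singleton.1
  g := ModuleCat.ofHom (Submodule.factor le_sup_left)
  zero := by
    ext
    exact Ideal.Quotient.eq_zero_iff_mem.2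
      (Ideal.mul_mem_left _ _ (Ideal.mem_sup_right (Ideal.mem_span_singleton_self m)))

lemma shortExact_colonShortComplex (I : Ideal R) (m : R) :
    (colonShortComplex I m).ShortExact := by
  refine ModuleCat.shortComplex_shortExact _ (fun y => ?_)
    ((injective_iff_map_eq_zero (colonShortComplex I m).f.hom).2 fun x hx => ?_)
    (Submodule.factor_surjective le_sup_left)
  · obtain ⟨y, rfl⟩ := Ideal.Quotient.mk_surjective y
    refine ⟨fun hy => ?_, ?_⟩
    · obtain ⟨u, hu, v, hv, rfl⟩ := Submodule.mem_sup.1 (Ideal.Quotient.eq_zero_iff_mem.1 hy)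
      obtain ⟨c, rfl⟩ := Ideal.mem_span_singleton'.1 hv
      refine ⟨Ideal.Quotient.mk _ c, Ideal.Quotient.eq.2 ?_⟩
      simpa using hu
    · rintro ⟨x, hx⟩
      rw [← hx]
      exact congrArg (· x) (colonShortComplex I m).zero
  · obtain ⟨x, rfl⟩ := Ideal.Quotient.mk_surjective x
    exact Ideal.Quotient.eq_zero_iff_mem.2
      (Submodule.mem_colon_singleton.2 (Ideal.Quotient.eq_zero_iff_mem.1 hx))

variable (K) in
/-- The dimension over `K` of `Tor_i(R/I, M)`. -/
noncomputable def torDim (I : Ideal R) (M : ModuleCat R) (i : ℕ) : Cardinal :=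
  kdim K R (((Tor (ModuleCat R) i).obj (ModuleCat.of R (R ⧸ I))).obj M)

variable {M : ModuleCat R}

open TensorProduct in
lemma torDim_zero {I : Ideal R} (hI : I ≤ Module.annihilator R M) :
    torDim K I M 0 = kdim K R M := by
  have hM : I • (⊤ : Submodule R M) = ⊥ := by
    rwa [← Submodule.le_annihilator_iff, Submodule.annihilator_top]
  let F := (tensoringLeft (ModuleCat R)).obj (ModuleCat.of R (R ⧸ I))
  exact kdim_congr <| F.leftDerivedZeroIsoSelf.app M ≪≫
    (quotTensorEquivQuotSMul M I ≪≫ₗ Submodule.quotEquivOfEqBot _ hM).toModuleIso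

lemma torDim_bot_succ (i : ℕ) : torDim K (⊥ : Ideal R) M (i + 1) = 0 := by
  have : Module.Flat R (R ⧸ (⊥ : Ideal R)) :=
    .of_linearEquiv (Submodule.quotEquivOfEqBot (⊥ : Ideal R) rfl)
  exact kdim_eq_zero_iff.2 (ModuleCat.subsingleton_of_isZero (isZero_Tor_succ_of_flat _ M i))

lemma torDim_sup_span_singleton_succ {I : Ideal R} {a b : R} (hb : b ∈ Module.annihilator R M)
    (ha : I.colon {a * b} ≤ I.colon {a}) (i : ℕ) :
    torDim K (I ⊔ Ideal.span {a * b}) M (i + 1) =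
      torDim K I M (i + 1) + torDim K (I.colon {a * b}) M i := by
  have hM : b • 𝟙 M = 0 := by
    ext x
    exact Module.mem_annihilator.1 hb x
  have hf : (colonShortComplex I (a * b)).f = b • ModuleCat.ofHom
      (Submodule.mapQ (I.colon {a * b}) I (LinearMap.mulRight R a) fun _ hx =>
        Submodule.mem_colon_singleton.1 (ha hx)) := by
    ext x
    obtain ⟨x, rfl⟩ := Ideal.Quotient.mk_surjective x
    change Ideal.Quotient.mk I (x * (a * b)) = Ideal.Quotient.mk I (b * (x * a))
    rw [mul_left_comm b, mul_comm b]
  refine kdim_Tor_succ_of_map_eq_zero (shortExact_colonShortComplex I (a * b)) (fun i => ?_) i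
  exact (congrArg (fun f => ((Tor _ i).map f).app M) hf).trans
    (Tor_map_smul_app_eq_zero (R := R) hM _ i)

end TorDim

section PermutableRegular

variable {ι R : Type*} [CommRing R] {f : ι → R}

/-- Every `f i` is a nonzerodivisor modulo the ideal generated by any finitely many of the other
members of the family, i.e. `f` is a weakly regular sequence in every order. -/
def IsPermutableRegular (f : ι → R) : Prop :=
  ∀ (A : Finset ι) (i : ι), i ∉ A → IsSMulRegular (R ⧸ Ideal.span (f '' A)) (f i)

lemma IsPermutableRegular.mem_of_mul_mem (hf : IsPermutableRegular f) {A : Finset ι} {i : ι}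
    (hi : i ∉ A) {x : R} (hx : x * f i ∈ Ideal.span (f '' A)) : x ∈ Ideal.span (f '' A) :=
  mem_of_isSMulRegular_quotient_of_smul_mem (hf A i hi) (by rwa [smul_eq_mul, mul_comm])

/-- The ideal generated by the products of two distinct members of the family `f` with indices
in `S`; the ideal `Ω` is the case `f i = x_i ^ ℓ_i`. -/
def pairIdeal (f : ι → R) (S : Finset ι) : Ideal R :=
  Ideal.span {g | ∃ i ∈ S, ∃ j ∈ S, i ≠ j ∧ g = f i * f j}

@[simp]
lemma pairIdeal_empty (f : ι → R) : pairIdeal f ∅ = ⊥ := by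
  simp [pairIdeal]

lemma pairIdeal_univ [Fintype ι] [LinearOrder ι] (f : ι → R) :
    pairIdeal f Finset.univ = Ideal.span {g | ∃ i j, i < j ∧ g = f i * f j} := by
  refine congrArg Ideal.span (Set.ext fun g => ⟨?_, ?_⟩)
  · rintro ⟨i, -, j, -, hij, rfl⟩
    rcases hij.lt_or_gt with h | h
    · exact ⟨i, j, h, rfl⟩
    · exact ⟨j, i, h, mul_comm _ _⟩
  · rintro ⟨i, j, hij, rfl⟩
    exact ⟨i, Finset.mem_univ i, j, Finset.mem_univ j, hij.ne, rfl⟩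

variable {S : Finset ι} {c y : ι}

lemma pairIdeal_insert [DecidableEq ι] (hy : y ∉ S) :
    pairIdeal f (insert y S) = pairIdeal f S ⊔ Ideal.span (f '' S) * Ideal.span {f y} := by
  rw [pairIdeal, pairIdeal, Ideal.span_mul_span', ← Ideal.span_union]
  refine congrArg Ideal.span (Set.ext fun g => ?_)
  constructor
  · rintro ⟨i, hi, j, hj, hij, rfl⟩
    rcases Finset.mem_insert.1 hi with rfl | hiS <;> rcases Finset.mem_insert.1 hj with rfl | hjS
    · exact absurd rfl hij
    · exact Or.inr ⟨f j, ⟨j, hjS, rfl⟩, f i, rfl, mul_comm _ _⟩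
    · exact Or.inr ⟨f i, ⟨i, hiS, rfl⟩, f j, rfl, rfl⟩
    · exact Or.inl ⟨i, hiS, j, hjS, hij, rfl⟩
  · rintro (⟨i, hi, j, hj, hij, rfl⟩ | ⟨_, ⟨i, hi, rfl⟩, _, rfl, rfl⟩)
    · exact ⟨i, Finset.mem_insert_of_mem hi, j, Finset.mem_insert_of_mem hj, hij, rfl⟩
    · exact ⟨i, Finset.mem_insert_of_mem hi, y, Finset.mem_insert_self y S,
        ne_of_mem_of_not_mem hi hy, rfl⟩

lemma pairIdeal_le_span_image_erase [DecidableEq ι] (f : ι → R) (S : Finset ι) (c : ι) :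
    pairIdeal f S ≤ Ideal.span (f '' (S.erase c)) := by
  refine Ideal.span_le.2 ?_
  rintro _ ⟨i, hi, j, hj, hij, rfl⟩
  by_cases hic : i = c
  · have hjc : j ∈ S.erase c := Finset.mem_erase.2 ⟨hic ▸ hij.symm, hj⟩
    exact Ideal.mul_mem_left _ _ (Ideal.subset_span ⟨j, hjc, rfl⟩)
  · exact Ideal.mul_mem_right _ _ (Ideal.subset_span ⟨i, Finset.mem_erase.2 ⟨hic, hi⟩, rfl⟩)

lemma mul_mem_pairIdeal [DecidableEq ι] (hc : c ∈ S) {x : R}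
    (hx : x ∈ Ideal.span (f '' (S.erase c))) : x * f c ∈ pairIdeal f S := by
  suffices Ideal.span (f '' (S.erase c)) ≤ (pairIdeal f S).colon {f c} from
    Submodule.mem_colon_singleton.1 (this hx)
  refine Ideal.span_le.2 ?_
  rintro _ ⟨i, hi, rfl⟩
  exact Submodule.mem_colon_singleton.2 <| Ideal.subset_span
    ⟨i, Finset.mem_of_mem_erase hi, c, hc, Finset.ne_of_mem_erase hi, rfl⟩

lemma IsPermutableRegular.mem_pairIdeal_iff [DecidableEq ι] (hf : IsPermutableRegular f)
    (hS : S.Nonempty) {x : R} : x ∈ pairIdeal f S ↔ ∀ c ∈ S, x ∈ Ideal.span (f '' (S.erase c)) := by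
  refine ⟨fun hx c _ => pairIdeal_le_span_image_erase f S c hx, fun hx => ?_⟩
  obtain ⟨c₀, hc₀⟩ := hS
  have hxS : x ∈ Ideal.span (f '' S) :=
    Ideal.span_mono (Set.image_mono (Finset.coe_subset.2 (S.erase_subset c₀))) (hx c₀ hc₀)
  obtain ⟨r, rfl⟩ : ∃ r : ι → R, ∑ a ∈ S, r a * f a = x :=
    (Submodule.mem_span_image_finset_iff_exists_fun' R).1 hxS
  refine sum_mem fun c hc => mul_mem_pairIdeal hc (hf.mem_of_mul_mem (S.notMem_erase c) ?_)
  have hrest : ∑ a ∈ S.erase c, r a * f a ∈ Ideal.span (f '' (S.erase c)) :=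
    sum_mem fun a ha => Ideal.mul_mem_left _ _ (Ideal.subset_span ⟨a, ha, rfl⟩)
  refine (Submodule.add_mem_iff_left _ hrest).1 ?_
  rw [Finset.add_sum_erase S (fun a => r a * f a) hc]
  exact hx c hc

lemma IsPermutableRegular.mem_pairIdeal_of_mul_mem (hf : IsPermutableRegular f) (hy : y ∉ S)
    {x : R} (hx : x * f y ∈ pairIdeal f S) : x ∈ pairIdeal f S := by
  classical
  rcases S.eq_empty_or_nonempty with rfl | hS
  · simpa using hf.mem_of_mul_mem hy (by simpa using hx)
  · rw [hf.mem_pairIdeal_iff hS] at hx ⊢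
    exact fun c hc => hf.mem_of_mul_mem (fun h => hy (Finset.mem_of_mem_erase h)) (hx c hc)

lemma IsPermutableRegular.colon_pairIdeal_sup [DecidableEq ι] (hf : IsPermutableRegular f)
    {A : Finset ι} (hA : A ⊆ S) (hc : c ∈ S) (hcA : c ∉ A) (hy : y ∉ S) :
    (pairIdeal f S ⊔ Ideal.span (f '' A) * Ideal.span {f y}).colon {f c * f y} =
      Ideal.span (f '' (S.erase c)) := by
  refine le_antisymm (fun x hx => ?_) fun x hx => ?_
  · obtain ⟨p, hp, _, hq', hpq⟩ := Submodule.mem_sup.1 (Submodule.mem_colon_singleton.1 hx)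
    obtain ⟨q, hq, rfl⟩ := Ideal.mem_mul_span_singleton.1 hq'
    have hxq : x * f c - q ∈ pairIdeal f S := hf.mem_pairIdeal_of_mul_mem hy <| by
      have : (x * f c - q) * f y = p := by
        rw [smul_eq_mul] at hpq
        linear_combination -hpq
      rwa [this]
    have hq : q ∈ Ideal.span (f '' (S.erase c)) :=
      Ideal.span_mono (Set.image_mono (Finset.subset_erase.2 ⟨hA, hcA⟩)) hq
    refine hf.mem_of_mul_mem (S.notMem_erase c) ?_
    rw [← sub_add_cancel (x * f c) q]
    exact add_mem (pairIdeal_le_span_image_erase f S c hxq) hq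
  · rw [Submodule.mem_colon_singleton, smul_eq_mul, ← mul_assoc]
    exact Ideal.mem_sup_left (Ideal.mul_mem_right _ _ (mul_mem_pairIdeal hc hx))

end PermutableRegular

section Betti

variable {K R ι : Type} [Field K] [CommRing R] [Algebra K R] {f : ι → R} {M : ModuleCat R}

lemma torDim_sup_span_singleton_succ_of_isSMulRegular {I : Ideal R} {b : R}
    (hb : b ∈ Module.annihilator R M) (hreg : IsSMulRegular (R ⧸ I) b) (i : ℕ) :
    torDim K (I ⊔ Ideal.span {b}) M (i + 1) = torDim K I M (i + 1) + torDim K I M i := by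
  have hcolon : I.colon {1 * b} = I := le_antisymm
    (fun x hx => mem_of_isSMulRegular_quotient_of_smul_mem hreg <| by
      simpa [mul_comm] using hx) Ideal.le_colon
  have h := torDim_sup_span_singleton_succ (K := K) (I := I) (a := 1) hb
    (hcolon.le.trans Ideal.le_colon) i
  rwa [hcolon, one_mul] at h

lemma span_image_le_annihilator (hM : ∀ i, f i ∈ Module.annihilator R M) (A : Set ι) :
    Ideal.span (f '' A) ≤ Module.annihilator R M :=
  Ideal.span_le.2 (Set.image_subset_iff.2 fun i _ => hM i)

lemma torDim_span_image (hf : IsPermutableRegular f) (hM : ∀ i, f i ∈ Module.annihilator R M)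
    (A : Finset ι) (h : ℕ) :
    torDim K (Ideal.span (f '' A)) M h = (A.card.choose h : ℕ) * kdim K R M := by
  classical
  induction A using Finset.induction_on generalizing h with
  | empty =>
    cases h with
    | zero => simpa using torDim_zero (K := K) (span_image_le_annihilator hM ∅)
    | succ h => simpa using torDim_bot_succ h
  | insert y A hy ih =>
    cases h with
    | zero => simpa using torDim_zero (K := K) (span_image_le_annihilator hM (insert y A))
    | succ h =>
      rw [Finset.coe_insert, Set.image_insert_eq, Ideal.span_insert, sup_comm,
        torDim_sup_span_singleton_succ_of_isSMulRegular (hM y) (hf A y hy), ih, ih, ← add_mul,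
        ← Nat.cast_add, Finset.card_insert_of_notMem hy, Nat.choose_succ_succ, add_comm]

lemma torDim_pairIdeal_sup_succ (hf : IsPermutableRegular f)
    (hM : ∀ i, f i ∈ Module.annihilator R M) {S A : Finset ι} (hA : A ⊆ S) {y : ι} (hy : y ∉ S)
    (h : ℕ) :
    torDim K (pairIdeal f S ⊔ Ideal.span (f '' A) * Ideal.span {f y}) M (h + 1) =
      torDim K (pairIdeal f S) M (h + 1) + (A.card * (S.card - 1).choose h : ℕ) * kdim K R M := by
  classical
  induction A using Finset.induction_on with
  | empty => simp
  | insert c A hcA ih =>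
    obtain ⟨hc, hA⟩ := Finset.insert_subset_iff.1 hA
    have hspan : pairIdeal f S ⊔ Ideal.span (f '' (insert c A : Finset ι)) * Ideal.span {f y} =
        (pairIdeal f S ⊔ Ideal.span (f '' A) * Ideal.span {f y}) ⊔ Ideal.span {f c * f y} := by
      rw [Finset.coe_insert, Set.image_insert_eq, Ideal.span_insert, Ideal.sup_mul,
        Ideal.span_singleton_mul_span_singleton, sup_comm (Ideal.span {f c * f y}), sup_assoc]
    have hcolon := hf.colon_pairIdeal_sup hA hc hcA hy
    have hle : Ideal.span (f '' (S.erase c)) ≤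
        (pairIdeal f S ⊔ Ideal.span (f '' A) * Ideal.span {f y}).colon {f c} := fun x hx =>
      Submodule.mem_colon_singleton.2 (Ideal.mem_sup_left (mul_mem_pairIdeal hc hx))
    rw [hspan, torDim_sup_span_singleton_succ (hM y) (hcolon.trans_le hle), ih hA, hcolon,
      torDim_span_image hf hM, Finset.card_erase_of_mem hc, Finset.card_insert_of_notMem hcA,
      add_assoc, ← add_mul, ← Nat.cast_add, ← Nat.succ_mul]

lemma succ_mul_choose_add_two (s h : ℕ) :
    (h + 1) * (s + 1).choose (h + 2) = (h + 1) * s.choose (h + 2) + s * (s - 1).choose h := by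
  cases s with
  | zero => simp [Nat.choose_eq_zero_of_lt]
  | succ s =>
    rw [Nat.add_sub_cancel, Nat.add_one_mul_choose_eq, Nat.choose_succ_succ (s + 1) (h + 1)]
    ring

theorem torDim_pairIdeal_succ (hf : IsPermutableRegular f)
    (hM : ∀ i, f i ∈ Module.annihilator R M) (S : Finset ι) (h : ℕ) :
    torDim K (pairIdeal f S) M (h + 1) =
      ((h + 1) * S.card.choose (h + 2) : ℕ) * kdim K R M := by
  classical
  induction S using Finset.induction_on with
  | empty => simpa using torDim_bot_succ h
  | insert y S hy ih =>
    rw [pairIdeal_insert hy, torDim_pairIdeal_sup_succ hf hM subset_rfl hy, ih, ← add_mul,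
      ← Nat.cast_add, ← succ_mul_choose_add_two, Finset.card_insert_of_notMem hy]

end Betti

section PolynomialRing

section CommRing

variable {σ R : Type*} [CommRing R] {ℓ : σ → ℕ}

lemma mem_span_X_pow_image {x : MvPolynomial σ R} {A : Set σ} :
    x ∈ Ideal.span ((fun i => X i ^ ℓ i) '' A) ↔ ∀ d ∈ x.support, ∃ a ∈ A, ℓ a ≤ d a := by
  have h : (fun i => X i ^ ℓ i : σ → MvPolynomial σ R) '' A =
      (fun d => monomial d 1) '' ((fun i => Finsupp.single i (ℓ i)) '' A) := by
    simp only [Set.image_image, X_pow_eq_monomial]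
  simp only [h, mem_ideal_span_monomial_image, Set.exists_mem_image, Finsupp.single_le_iff]

lemma isPermutableRegular_X_pow (ℓ : σ → ℕ) :
    IsPermutableRegular fun i => (X i ^ ℓ i : MvPolynomial σ R) := by
  intro A i hi
  refine (isSMulRegular_quotient_iff_mem_of_smul_mem _ _).2 fun x hx => ?_
  rw [mem_span_X_pow_image] at hx ⊢
  intro d hd
  obtain ⟨a, ha, had⟩ := hx (d + Finsupp.single i (ℓ i)) <| by
    rw [smul_eq_mul, mem_support_iff]
    change coeff _ (X i ^ ℓ i * x) ≠ 0
    rw [X_pow_eq_monomial, add_comm, coeff_monomial_mul, one_mul]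
    exact mem_support_iff.1 hd
  have hai : i ≠ a := by
    rintro rfl
    exact hi ha
  exact ⟨a, ha, by simpa [hai] using had⟩

lemma X_pow_mem_annihilator {i : σ} {k : ℕ} (hk : 0 < k) :
    (X i ^ k : MvPolynomial σ R) ∈ Module.annihilator (MvPolynomial σ R)
      (MvPolynomial σ R ⧸ idealOfVars σ R) := by
  rw [Ideal.annihilator_quotient]
  exact Ideal.pow_mem_of_mem _ (Ideal.subset_span (Set.mem_range_self i)) k hk

end CommRing

lemma kdim_quotient_idealOfVars (K σ : Type) [Field K] :
    kdim K (MvPolynomial σ K)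
      (ModuleCat.of _ (MvPolynomial σ K ⧸ idealOfVars σ K)) = 1 := by
  have hmem (x : MvPolynomial σ K) : x ∈ idealOfVars σ K ↔ coeff 0 x = 0 := by
    simpa [Finsupp.degree_eq_zero_iff] using mem_pow_idealOfVars_iff' 1 x
  let := Module.compHom (MvPolynomial σ K ⧸ idealOfVars σ K) (algebraMap K (MvPolynomial σ K))
  refine rank_eq_one (Ideal.Quotient.mk _ 1) (fun h => ?_) fun w => ?_
  · simpa using (hmem 1).1 (Ideal.Quotient.eq_zero_iff_mem.1 h)
  · obtain ⟨w, rfl⟩ := Ideal.Quotient.mk_surjective w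
    refine ⟨coeff 0 w, Ideal.Quotient.eq.2 ((hmem _).2 ?_)⟩
    simp

end PolynomialRing

theorem betti_numbers_of_omega_general
    {K R ι : Type} [Field K] [CommRing R] [Algebra K R] [Fintype ι] [LinearOrder ι] [Nonempty ι]
    {f : ι → R} (hf : IsPermutableRegular f) {M : ModuleCat R}
    (hM : ∀ i, f i ∈ Module.annihilator R M) :
    (∀ h : ℕ, torDim K (Ideal.span {g | ∃ i j, i < j ∧ g = f i * f j}) M (h + 1) =
      ((h + 1) * (Fintype.card ι).choose (h + 2) : ℕ) * kdim K R M) ∧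
    ∀ j : ℕ, Fintype.card ι ≤ j → Subsingleton
      (((Tor (ModuleCat R) j).obj
        (ModuleCat.of R (R ⧸ Ideal.span {g | ∃ i j, i < j ∧ g = f i * f j}))).obj M) := by
  have hdim (h : ℕ) := torDim_pairIdeal_succ (K := K) hf hM Finset.univ h
  rw [pairIdeal_univ, Finset.card_univ] at hdim
  refine ⟨hdim, fun j hj => ?_⟩
  obtain ⟨h, rfl⟩ := Nat.exists_eq_add_one_of_ne_zero (Fintype.card_pos.trans_le hj).ne'
  refine (kdim_eq_zero_iff (K := K)).1 ((hdim h).trans ?_)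
  rw [Nat.choose_eq_zero_of_lt (by omega), mul_zero, Nat.cast_zero, zero_mul]

/-- Let `Ω = (x_i^{ℓ_i} x_j^{ℓ_j} : i < j) ⊆ S = K[x_1,…,x_n]`, with
`ℓ_1,…,ℓ_n` positive.  Then for `0 ≤ h ≤ n-2`,
`dim_K Tor_{h+1}^S(S/Ω, S/𝔪) = (h+1)·C(n,h+2)`, and `Tor_j^S(S/Ω, S/𝔪) = 0` for `j ≥ n`. -/
theorem betti_numbers_of_omega
    (K : Type) [Field K] [Infinite K] (n : ℕ) (hn : 2 ≤ n)
    (ℓ : Fin n → ℕ) (hℓ : ∀ j, 0 < ℓ j) :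
    (∀ h : ℕ, h ≤ n - 2 →
      kdim K (MvPolynomial (Fin n) K)
          (torModule K n
            (Ideal.span {g : MvPolynomial (Fin n) K |
              ∃ i j : Fin n, i < j ∧ g = X i ^ ℓ i * X j ^ ℓ j})
            (h + 1)) =
        ((h + 1) * Nat.choose n (h + 2) : ℕ)) ∧
    (∀ j : ℕ, n ≤ j →
      Subsingleton
        (torModule K n
          (Ideal.span {g : MvPolynomial (Fin n) K |
            ∃ i j : Fin n, i < j ∧ g = X i ^ ℓ i * X j ^ ℓ j})
          j)) := by
  have : NeZero n := ⟨by omega⟩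
  have h := betti_numbers_of_omega_general (K := K) (isPermutableRegular_X_pow ℓ)
    (M := ModuleCat.of _ (MvPolynomial (Fin n) K ⧸ idealOfVars (Fin n) K))
    fun i => X_pow_mem_annihilator (hℓ i)
  simp only [kdim_quotient_idealOfVars, mul_one, Fintype.card_fin] at h
  exact ⟨fun i _ => h.1 i, h.2⟩
end
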